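/- Let X be a simplicial tree equipped with the combinatorial path metric and let S be a finite nonempty set of automorphisms of X with λ(S, X) > 0 (i.e. S has no global fixed point). Then S^{≤2} = S ∪ S·S contains a loxodromic element b with the following property: there is a universal constant c₀ > 0 such that for every o ∈ X with λ(S, o) = λ(S, X) one has d(o, b·o) ≥ λ(S, X) − 10, and the bi-infinite concatenation α = ⋃_{n∈ℤ} bⁿ[o, b·o] of translates of the geodesic [o, b·o] is a c₀-quasi-geodesic (hence a quasi-axis for b). -/

import Mathlib

open Pointwise

/-- A geodesic from `a` to `b`, parametrized by arc length on `[0, dist a b]`. -/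
def IsGeodesicSeg {X : Type*} [MetricSpace X] (γ : ℝ → X) (a b : X) : Prop :=
  γ 0 = a ∧ γ (dist a b) = b ∧
    ∀ s ∈ Set.Icc (0 : ℝ) (dist a b), ∀ t ∈ Set.Icc (0 : ℝ) (dist a b),
      dist (γ s) (γ t) = |s - t|

/-- A geodesic metric space: any two points are joined by a geodesic segment. -/
def GeodesicMetricSpace (X : Type*) [MetricSpace X] : Prop :=
  ∀ a b : X, ∃ γ : ℝ → X, IsGeodesicSeg γ a b

/-- `δ`-hyperbolicity via thin triangles: every side of a geodesic triangle is in the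
`δ`-neighbourhood of the union of the other two sides. -/
def DeltaHyperbolic (X : Type*) [MetricSpace X] (δ : ℝ) : Prop :=
  ∀ a b c : X, ∀ γ₁ γ₂ γ₃ : ℝ → X,
    IsGeodesicSeg γ₁ a b → IsGeodesicSeg γ₂ b c → IsGeodesicSeg γ₃ c a →
    ∀ t ∈ Set.Icc (0 : ℝ) (dist a b),
      (∃ u ∈ Set.Icc (0 : ℝ) (dist b c), dist (γ₁ t) (γ₂ u) ≤ δ) ∨
      (∃ u ∈ Set.Icc (0 : ℝ) (dist c a), dist (γ₁ t) (γ₃ u) ≤ δ)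

/-- Displacement `λ(S,x) = max_{s ∈ S} d(x, s·x)` of a finite set of isometries at `x`. -/
noncomputable def idispAt {X : Type*} [MetricSpace X] (S : Finset (X ≃ᵢ X)) (x : X) : ℝ :=
  sSup ((fun s : X ≃ᵢ X => dist x (s x)) '' (S : Set (X ≃ᵢ X)))

/-- Displacement `λ(S,X) = inf_{x ∈ X} λ(S,x)` of a finite set of isometries on `X`. -/
noncomputable def idispSpace {X : Type*} [MetricSpace X] (S : Finset (X ≃ᵢ X)) : ℝ :=
  sInf (Set.range fun x : X => idispAt S x)

/-- An isometry is loxodromic if its stable translation length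
`τ(b) = lim_n d(x, bⁿ·x)/n` is strictly positive. -/
def Loxodromic {X : Type*} [MetricSpace X] (b : X ≃ᵢ X) : Prop :=
  ∃ (x : X) (τ : ℝ), 0 < τ ∧
    Filter.Tendsto (fun n : ℕ => dist x ((b ^ n) x) / n) Filter.atTop (nhds τ)

/-- The bi-infinite concatenation `α = ⋃_{n ∈ ℤ} bⁿ[o, b·o]` of the `b`-translates of a
geodesic `γ` from `o` to `b·o`, parametrized by arc length. -/
noncomputable def axisPath {X : Type*} [MetricSpace X] (b : X ≃ᵢ X) (o : X) (γ : ℝ → X)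
    (t : ℝ) : X :=
  (b ^ ⌊t / dist o (b o)⌋)
    (γ (t - (⌊t / dist o (b o)⌋ : ℝ) * dist o (b o)))

/-- A path `α : ℝ → X` parametrized by arc length is a `c`-quasi-geodesic: the length
`|s - t|` of any subpath is at most `c · d(α s, α t) + c`. -/
def IsQuasiGeodesicParam {X : Type*} [MetricSpace X] (c : ℝ) (α : ℝ → X) : Prop :=
  ∀ s t : ℝ, |s - t| ≤ c * dist (α s) (α t) + c ∧ dist (α s) (α t) ≤ |s - t|

/-!
A `0`-hyperbolic geodesic space satisfies the four-point condition: among the three sums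
`d(a,b) + d(c,d)`, `d(a,c) + d(b,d)`, `d(a,d) + d(b,c)` the two largest agree. Hence an isometry
`s` either satisfies `d(y, s² y) > d(y, s y)` for some `y`, and then `d(y, sⁿ y)` grows linearly
and `s` is loxodromic, or it fixes the midpoint of every `[y, s y]`.

If `λ(S, ·)` attains its infimum `L` at `o`, there are two cases. Either some `s ∈ S` moves every
point by at least `L`; then each minimizer lies on the axis of `s`. Or
`o, s o, s² o` are not aligned for any `s ∈ S` with `d(o, s o) = L`; then two such elements `s`,
`t` must move `o` in opposite directions, since otherwise a small step from `o` towards `s o`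
would lower the displacement. In that case `o` is the only minimizer and it lies on the axis of
`s t`. If the infimum is not attained, only a loxodromic element is needed, and Serre's fixed
point lemma provides it.
-/

section Hyperbolic

variable {X : Type*} [MetricSpace X]

lemma IsGeodesicSeg.dist_left {γ : ℝ → X} {a b : X} (hγ : IsGeodesicSeg γ a b)
    {t : ℝ} (ht : t ∈ Set.Icc (0 : ℝ) (dist a b)) :
    dist a (γ t) = t := by
  have h := hγ.2.2 0 ⟨le_rfl, dist_nonneg⟩ t ht
  rwa [hγ.1, zero_sub, abs_neg, abs_of_nonneg ht.1] at h

lemma IsGeodesicSeg.dist_right {γ : ℝ → X} {a b : X} (hγ : IsGeodesicSeg γ a b)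
    {t : ℝ} (ht : t ∈ Set.Icc (0 : ℝ) (dist a b)) :
    dist (γ t) b = dist a b - t := by
  have h := hγ.2.2 t ht (dist a b) ⟨dist_nonneg, le_rfl⟩
  rwa [hγ.2.1, abs_sub_comm, abs_of_nonneg (sub_nonneg.2 ht.2)] at h

lemma IsGeodesicSeg.dist_add_dist {γ : ℝ → X} {a b : X} (hγ : IsGeodesicSeg γ a b)
    {t : ℝ} (ht : t ∈ Set.Icc (0 : ℝ) (dist a b)) :
    dist a (γ t) + dist (γ t) b = dist a b := by
  rw [hγ.dist_left ht, hγ.dist_right ht, add_sub_cancel]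

lemma GeodesicMetricSpace.exists_dist_eq (hG : GeodesicMetricSpace X) (a b : X)
    {r : ℝ} (hr : r ∈ Set.Icc (0 : ℝ) (dist a b)) :
    ∃ p, dist a p = r ∧ dist p b = dist a b - r := by
  obtain ⟨γ, hγ⟩ := hG a b
  exact ⟨γ r, hγ.dist_left hr, hγ.dist_right hr⟩

lemma GeodesicMetricSpace.exists_midpoint (hG : GeodesicMetricSpace X) (a b : X) :
    ∃ m, dist a m = dist a b / 2 ∧ dist m b = dist a b / 2 := by
  have hab : 0 ≤ dist a b := dist_nonneg
  obtain ⟨m, ham, hmb⟩ := hG.exists_dist_eq a b (r := dist a b / 2) ⟨by linarith, by linarith⟩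
  exact ⟨m, ham, by linarith⟩

lemma DeltaHyperbolic.dist_add_dist_eq_or (hD : DeltaHyperbolic X 0)
    (hG : GeodesicMetricSpace X) {a b : X} {γ : ℝ → X} (hγ : IsGeodesicSeg γ a b) (c : X)
    {t : ℝ} (ht : t ∈ Set.Icc (0 : ℝ) (dist a b)) :
    dist b (γ t) + dist (γ t) c = dist b c ∨ dist a (γ t) + dist (γ t) c = dist a c := by
  obtain ⟨γ₂, hγ₂⟩ := hG b c
  obtain ⟨γ₃, hγ₃⟩ := hG c a
  rcases hD a b c γ γ₂ γ₃ hγ hγ₂ hγ₃ t ht with ⟨u, hu, htu⟩ | ⟨u, hu, htu⟩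
  · exact Or.inl (dist_le_zero.1 htu ▸ hγ₂.dist_add_dist hu)
  · have h := hγ₃.dist_add_dist hu
    rw [← dist_le_zero.1 htu] at h
    exact Or.inr (by rw [dist_comm a (γ t), dist_comm (γ t) c, dist_comm a c, add_comm, h])

/-- The four-point condition, that is, `0`-hyperbolicity in the sense of Gromov, expressed by
distances alone. All tree geometry below is derived from it; that `m` lies on the geodesic
`[a, b]` is written `dist a m + dist m b = dist a b`. -/
def FourPointCondition (X : Type*) [MetricSpace X] : Prop :=
  ∀ x y z w : X, dist x y + dist z w ≤ max (dist x z + dist y w) (dist x w + dist y z)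

lemma DeltaHyperbolic.fourPointCondition (hD : DeltaHyperbolic X 0)
    (hG : GeodesicMetricSpace X) : FourPointCondition X := by
  intro x y z w
  obtain ⟨γ, hγ⟩ := hG x y
  -- At this parameter, the Gromov product `(y|z)_x`, `γ` passes through the median of `x, y, z`.
  set r := (dist x y + dist x z - dist y z) / 2 with hr
  have hr_mem : r ∈ Set.Icc (0 : ℝ) (dist x y) := by
    constructor
    · linarith [dist_triangle_left y z x]
    · linarith [dist_triangle x y z]
  have hxm := hγ.dist_left hr_mem
  have hmy := hγ.dist_right hr_mem
  rw [dist_comm] at hmy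
  have hxmz : dist x (γ r) + dist (γ r) z = dist x z := by
    rcases hD.dist_add_dist_eq_or hG hγ z hr_mem with h | h <;> linarith
  have hymz : dist y (γ r) + dist (γ r) z = dist y z := by linarith
  have hzw := dist_triangle_left z w (γ r)
  rw [le_max_iff]
  rcases hD.dist_add_dist_eq_or hG hγ w hr_mem with h | h
  · exact Or.inl (by linarith [hxmz])
  · exact Or.inr (by linarith [hymz])

end Hyperbolic

/-- `o` lies on the axis of `b`, that is, `b` moves `o` and the three points `o`, `b o`, `b² o`
are aligned in this order. -/
def LiesOnAxis {X : Type*} [MetricSpace X] (b : X ≃ᵢ X) (o : X) : Prop :=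
  0 < dist o (b o) ∧ dist o (b (b o)) = 2 * dist o (b o)

section FourPoint

variable {X : Type*} [MetricSpace X]

namespace FourPointCondition

lemma add_eq_add_of_lt (hX : FourPointCondition X) {a b c d : X}
    (h : dist a b + dist c d < dist a c + dist b d) :
    dist a d + dist b c = dist a c + dist b d := by
  apply le_antisymm
  · have := hX a d b c
    rw [dist_comm d c, dist_comm d b] at this
    exact this.trans (max_le h.le le_rfl)
  · have := hX a c b d
    rw [dist_comm c b] at this
    exact (le_max_iff.1 this).resolve_left (not_le.2 h)

lemma dist_eq_add_of_overlap (hX : FourPointCondition X) {a b c d : X}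
    (hac : dist a c = dist a b + dist b c) (hbd : dist b d = dist b c + dist c d)
    (hbc : 0 < dist b c) : dist a d = dist a b + dist b c + dist c d := by
  have := hX.add_eq_add_of_lt (a := a) (b := b) (c := c) (d := d) (by linarith)
  linarith

lemma eq_of_between (hX : FourPointCondition X) {a b m n : X}
    (hm : dist a m + dist m b = dist a b) (hn : dist a n + dist n b = dist a b)
    (hmn : dist a m = dist a n) : m = n := by
  have h := hX a b m n
  rw [dist_comm b n, dist_comm b m] at h
  apply dist_le_zero.1
  rcases le_max_iff.1 h with h | h <;> linarith

lemma between_of_dist_le (hX : FourPointCondition X) {a b m n : X}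
    (hm : dist a m + dist m b = dist a b) (hn : dist a n + dist n b = dist a b)
    (hmn : dist a m ≤ dist a n) : dist m n + dist n b = dist m b := by
  have h := hX a b m n
  rw [dist_comm b n, dist_comm b m] at h
  have htri := dist_triangle m n b
  rcases le_max_iff.1 h with h | h <;> linarith

lemma between_of_midpoint (hX : FourPointCondition X) {x y m q : X}
    (hxm : dist x m = dist x y / 2) (hmy : dist m y = dist x y / 2)
    (hq : dist x q = dist y q) : dist x m + dist m q = dist x q := by
  have h := hX x y m q
  rw [dist_comm y m] at h
  have htri := dist_triangle x m q
  rcases le_max_iff.1 h with h | h <;> linarith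

lemma apply_eq_of_between (hX : FourPointCondition X) (t : X ≃ᵢ X) {a b m : X}
    (ha : t a = a) (hb : t b = b) (hm : dist a m + dist m b = dist a b) : t m = m := by
  have ham : dist a (t m) = dist a m := by rw [← t.dist_eq a m, ha]
  have hmb : dist (t m) b = dist m b := by rw [← t.dist_eq m b, hb]
  exact hX.eq_of_between (by rw [ham, hmb, hm]) hm ham

lemma dist_pow_add_dist_pow (hX : FourPointCondition X) (s : X ≃ᵢ X) (y : X) (n : ℕ)
    (h : dist y (s y) < dist y ((s ^ (n + 1)) y)) :
    dist y ((s ^ (n + 2)) y) + dist y ((s ^ n) y) = 2 * dist y ((s ^ (n + 1)) y) := by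
  have hsucc (k : ℕ) : (s ^ (k + 1)) y = s ((s ^ k) y) := by
    rw [pow_succ', IsometryEquiv.mul_apply]
  have hbc : dist (s y) ((s ^ (n + 1)) y) = dist y ((s ^ n) y) := by
    rw [hsucc, s.dist_eq]
  have hbd : dist (s y) ((s ^ (n + 2)) y) = dist y ((s ^ (n + 1)) y) := by
    rw [hsucc (n + 1), s.dist_eq]
  have hcd : dist ((s ^ (n + 1)) y) ((s ^ (n + 2)) y) = dist y (s y) := by
    rw [pow_succ s (n + 1), IsometryEquiv.mul_apply, IsometryEquiv.dist_eq]
  have := hX.add_eq_add_of_lt (a := y) (b := s y) (c := (s ^ (n + 1)) y)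
    (d := (s ^ (n + 2)) y) (by linarith)
  linarith

lemma dist_pow_succ (hX : FourPointCondition X) (s : X ≃ᵢ X) {y : X}
    (h : dist y (s y) < dist y (s (s y))) (n : ℕ) :
    dist y ((s ^ (n + 1)) y) = dist y (s y) + n * (dist y (s (s y)) - dist y (s y)) := by
  induction n using Nat.twoStepInduction with
  | zero => simp
  | one => simp [pow_succ]
  | more n ih₀ ih₁ =>
    have hlt : dist y (s y) < dist y ((s ^ (n + 1 + 1)) y) := by
      rw [ih₁]
      exact lt_add_of_pos_right _ (mul_pos (by positivity) (sub_pos.2 h))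
    have hrec := hX.dist_pow_add_dist_pow s y (n + 1) hlt
    rw [ih₁, ih₀] at hrec
    push_cast at hrec ⊢
    linarith

lemma loxodromic_of_dist_lt (hX : FourPointCondition X) {s : X ≃ᵢ X} {y : X}
    (h : dist y (s y) < dist y (s (s y))) : Loxodromic s := by
  set τ := dist y (s (s y)) - dist y (s y) with hτ
  refine ⟨y, τ, sub_pos.2 h, ?_⟩
  rw [← Filter.tendsto_add_atTop_iff_nat 1]
  have hquot : (fun n : ℕ => dist y ((s ^ (n + 1)) y) / ((n + 1 : ℕ) : ℝ)) =
      fun n : ℕ => τ + (dist y (s y) - τ) * (1 / ((n : ℝ) + 1)) := by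
    ext n
    have hn : (n : ℝ) + 1 ≠ 0 := by positivity
    rw [hX.dist_pow_succ s h n, ← hτ]
    push_cast
    field_simp
    ring
  rw [hquot]
  have hzero := (tendsto_one_div_add_atTop_nhds_zero_nat (𝕜 := ℝ)).const_mul (dist y (s y) - τ)
  simpa using hzero.const_add τ

lemma apply_midpoint_eq_of_not_loxodromic (hX : FourPointCondition X) {s : X ≃ᵢ X}
    (hs : ¬ Loxodromic s) {y m : X} (hym : dist y m = dist y (s y) / 2)
    (hmy : dist m (s y) = dist y (s y) / 2) : s m = m := by
  have hss : dist y (s (s y)) ≤ dist y (s y) := not_lt.1 (mt hX.loxodromic_of_dist_lt hs)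
  have hsm : dist (s y) (s m) = dist y m := s.dist_eq _ _
  have hms : dist (s m) (s (s y)) = dist m (s y) := s.dist_eq _ _
  have hsy : dist (s y) (s (s y)) = dist y (s y) := s.dist_eq _ _
  rw [dist_comm m] at hmy
  have hm : dist m (s (s y)) ≤ dist y (s y) / 2 := by
    rcases le_max_iff.1 (hX y (s y) m (s (s y))) with h | h <;> linarith
  have htri := dist_triangle (s y) m (s (s y))
  rw [dist_comm m (s y)] at hms
  exact hX.eq_of_between (a := s y) (b := s (s y)) (by linarith) (by linarith) (by linarith)

lemma exists_common_fixed_point_pair (hX : FourPointCondition X) (hG : GeodesicMetricSpace X)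
    (x : X) {s t : X ≃ᵢ X} (hs : ¬ Loxodromic s) (ht : ¬ Loxodromic t)
    (hst : ¬ Loxodromic (s * t)) : ∃ q, s q = q ∧ t q = q := by
  obtain ⟨y, hxy, hyx⟩ := hG.exists_midpoint x ((s * t) x)
  have hy : s (t y) = y := hX.apply_midpoint_eq_of_not_loxodromic hst hxy hyx
  obtain ⟨q, hyq, hqy⟩ := hG.exists_midpoint y (t y)
  -- As `s (t y) = y`, the point `q` is also the midpoint of `[t y, s (t y)]`.
  refine ⟨q, hX.apply_midpoint_eq_of_not_loxodromic hs (y := t y) ?_ ?_,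
    hX.apply_midpoint_eq_of_not_loxodromic ht hyq hqy⟩
  · rw [hy, dist_comm, hqy, dist_comm]
  · rw [hy, dist_comm, hyq, dist_comm]

lemma exists_common_fixed_point (hX : FourPointCondition X) (hG : GeodesicMetricSpace X)
    [Nonempty X] {S : Finset (X ≃ᵢ X)} (hS : S.Nonempty) (hlox : ∀ s ∈ S, ¬ Loxodromic s)
    (hlox_mul : ∀ s ∈ S, ∀ t ∈ S, ¬ Loxodromic (s * t)) : ∃ p, ∀ t ∈ S, t p = p := by
  obtain ⟨x⟩ := ‹Nonempty X›
  obtain ⟨s, hs, hmax⟩ := S.exists_max_image (fun s => dist x (s x)) hS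
  obtain ⟨p, hxp, hps⟩ := hG.exists_midpoint x (s x)
  refine ⟨p, fun t ht => ?_⟩
  obtain ⟨q, hsq, htq⟩ :=
    hX.exists_common_fixed_point_pair hG x (hlox s hs) (hlox t ht) (hlox_mul s hs t ht)
  obtain ⟨r, hxr, hrt⟩ := hG.exists_midpoint x (t x)
  have htr : t r = r := hX.apply_midpoint_eq_of_not_loxodromic (hlox t ht) hxr hrt
  have hp : dist x p + dist p q = dist x q :=
    hX.between_of_midpoint hxp hps (by rw [← s.dist_eq x q, hsq])
  have hr : dist x r + dist r q = dist x q :=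
    hX.between_of_midpoint hxr hrt (by rw [← t.dist_eq x q, htq])
  -- `t` fixes `[r, q]` pointwise, and `p` lies on it because `s` moves `x` farthest.
  have hrp : dist x r ≤ dist x p := by linarith [hmax t ht]
  exact hX.apply_eq_of_between t htr htq (hX.between_of_dist_le hr hp hrp)

end FourPointCondition

lemma dist_pow_apply_le (s : X ≃ᵢ X) (x : X) (n : ℕ) :
    dist x ((s ^ n) x) ≤ n * dist x (s x) := by
  induction n with
  | zero => simp
  | succ n ih =>
    have htri := dist_triangle x ((s ^ n) x) ((s ^ n) (s x))
    rw [(s ^ n).dist_eq] at htri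
    rw [pow_succ, IsometryEquiv.mul_apply]
    push_cast
    linarith

namespace LiesOnAxis

variable {b : X ≃ᵢ X} {o : X}

lemma dist_lt_dist_apply_apply (hb : LiesOnAxis b o) : dist o (b o) < dist o (b (b o)) := by
  linarith [hb.1, hb.2]

lemma dist_pow (hb : LiesOnAxis b o) (hX : FourPointCondition X) (n : ℕ) :
    dist o ((b ^ n) o) = n * dist o (b o) := by
  cases n with
  | zero => simp
  | succ n =>
    rw [hX.dist_pow_succ b hb.dist_lt_dist_apply_apply n, hb.2]
    push_cast
    ring

lemma dist_zpow_zpow (hb : LiesOnAxis b o) (hX : FourPointCondition X) {m n : ℤ}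
    (hmn : m ≤ n) : dist ((b ^ m) o) ((b ^ n) o) = (n - m) * dist o (b o) := by
  obtain ⟨k, rfl⟩ := Int.le.dest hmn
  rw [zpow_add, IsometryEquiv.mul_apply, (b ^ m).dist_eq, zpow_natCast, hb.dist_pow hX]
  push_cast
  ring

lemma dist_apply_le (hb : LiesOnAxis b o) (hX : FourPointCondition X) (x : X) :
    dist o (b o) ≤ dist x (b x) := by
  by_contra! hlt
  obtain ⟨n, hn⟩ := exists_nat_gt (2 * dist o x / (dist o (b o) - dist x (b x)))
  rw [div_lt_iff₀ (sub_pos.2 hlt)] at hn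
  have hle : n * dist o (b o) ≤ n * dist x (b x) + 2 * dist o x :=
    calc n * dist o (b o) = dist o ((b ^ n) o) := (hb.dist_pow hX n).symm
      _ ≤ dist o x + dist x ((b ^ n) x) + dist ((b ^ n) x) ((b ^ n) o) := dist_triangle4 ..
      _ = dist x ((b ^ n) x) + 2 * dist o x := by rw [(b ^ n).dist_eq, dist_comm x o]; ring
      _ ≤ n * dist x (b x) + 2 * dist o x := by gcongr; exact dist_pow_apply_le b x n
  linarith

lemma dist_zpow_apply_zpow_apply (hb : LiesOnAxis b o) (hX : FourPointCondition X) {p q : X}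
    (hp : dist o p + dist p (b o) = dist o (b o)) (hq : dist o q + dist q (b o) = dist o (b o))
    {m n : ℤ} (hmn : m < n) :
    dist ((b ^ m) p) ((b ^ n) q) = (n - m) * dist o (b o) + dist o q - dist o p := by
  have hsucc (k : ℤ) : (b ^ (k + 1)) o = (b ^ k) (b o) := by
    rw [zpow_add_one, IsometryEquiv.mul_apply]
  have hinner := hb.dist_zpow_zpow hX (m := m + 1) (n := n) hmn
  have houter := hb.dist_zpow_zpow hX (m := m) (n := n + 1) (by lia)
  rw [hsucc] at hinner houter
  push_cast at hinner houter
  have hupper := dist_triangle4 ((b ^ m) p) ((b ^ m) (b o)) ((b ^ n) o) ((b ^ n) q)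
  have hlower := dist_triangle4 ((b ^ m) o) ((b ^ m) p) ((b ^ n) q) ((b ^ n) (b o))
  rw [(b ^ m).dist_eq, (b ^ n).dist_eq] at hupper hlower
  apply le_antisymm <;> linarith

lemma isometry_axisPath (hb : LiesOnAxis b o) (hX : FourPointCondition X) {γ : ℝ → X}
    (hγ : IsGeodesicSeg γ o (b o)) : Isometry (axisPath b o γ) := by
  have hmem (u : ℝ) : u - ⌊u / dist o (b o)⌋ * dist o (b o) ∈ Set.Icc 0 (dist o (b o)) :=
    ⟨Int.sub_floor_div_mul_nonneg u hb.1, (Int.sub_floor_div_mul_lt u hb.1).le⟩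
  have hdist {u v : ℝ} (huv : u ≤ v) :
      dist (axisPath b o γ u) (axisPath b o γ v) = v - u := by
    have hfloor : ⌊u / dist o (b o)⌋ ≤ ⌊v / dist o (b o)⌋ := by gcongr
    unfold axisPath
    rcases hfloor.eq_or_lt with heq | hlt
    · have hv := hmem v
      rw [← heq] at hv ⊢
      rw [IsometryEquiv.dist_eq, hγ.2.2 _ (hmem u) _ hv, abs_sub_comm, sub_sub_sub_cancel_right,
        abs_of_nonneg (sub_nonneg.2 huv)]
    · rw [hb.dist_zpow_apply_zpow_apply hX (hγ.dist_add_dist (hmem u))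
        (hγ.dist_add_dist (hmem v)) hlt, hγ.dist_left (hmem u), hγ.dist_left (hmem v)]
      ring
  refine Isometry.of_dist_eq fun u v => ?_
  rw [Real.dist_eq]
  rcases le_total u v with huv | hvu
  · rw [hdist huv, abs_sub_comm, abs_of_nonneg (sub_nonneg.2 huv)]
  · rw [dist_comm, hdist hvu, abs_of_nonneg (sub_nonneg.2 hvu)]

end LiesOnAxis

lemma isQuasiGeodesicParam_of_isometry {α : ℝ → X} (hα : Isometry α) {c : ℝ} (hc : 1 ≤ c) :
    IsQuasiGeodesicParam c α := by
  intro s t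
  rw [hα.dist_eq, Real.dist_eq]
  exact ⟨by nlinarith [abs_nonneg (s - t)], le_rfl⟩

namespace FourPointCondition

lemma liesOnAxis_of_forall_dist_le (hX : FourPointCondition X) (hG : GeodesicMetricSpace X)
    {s : X ≃ᵢ X} {o : X} (hpos : 0 < dist o (s o)) (hmin : ∀ x, dist o (s o) ≤ dist x (s x)) :
    LiesOnAxis s o := by
  refine ⟨hpos, ?_⟩
  -- If `[o, s o]` and `[s o, s² o]` backtracked, `s` would move the midpoint `m` by less.
  obtain ⟨m, hom, hms⟩ := hG.exists_midpoint o (s o)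
  have hsm : dist (s o) (s m) = dist o m := s.dist_eq _ _
  have hmss : dist (s m) (s (s o)) = dist m (s o) := s.dist_eq _ _
  have hss : dist (s o) (s (s o)) = dist o (s o) := s.dist_eq _ _
  have hmsm : dist m (s m) = dist m (s o) + dist (s o) (s m) :=
    le_antisymm (dist_triangle _ _ _) (by linarith [hmin m])
  have hosm := hX.dist_eq_add_of_overlap (a := o) (b := m) (c := s o) (d := s m)
    (by linarith) hmsm (by linarith)
  have hoss := hX.dist_eq_add_of_overlap (a := o) (b := s o) (c := s m) (d := s (s o))
    (by linarith) (by linarith) (by linarith)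
  linarith

lemma dist_apply_eq_add_of_between (hX : FourPointCondition X) {s : X ≃ᵢ X} {o x : X}
    (hs : dist o (s (s o)) < 2 * dist o (s o)) (hx : dist o (s o) + dist o x = dist (s o) x) :
    dist o (s x) = dist o (s o) + dist o x := by
  have hso : dist (s o) (s (s o)) = dist o (s o) := s.dist_eq _ _
  have hsx : dist (s o) (s x) = dist o x := s.dist_eq _ _
  have hssx : dist (s (s o)) (s x) = dist (s o) x := s.dist_eq _ _
  have h := hX.add_eq_add_of_lt (a := o) (b := s (s o)) (c := s o) (d := s x)
    (by linarith)
  rw [dist_comm (s (s o)) (s o)] at h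
  linarith

lemma dist_lt_dist_apply_of_between (hX : FourPointCondition X) {s : X ≃ᵢ X} {o x : X}
    (hs : dist o (s (s o)) < 2 * dist o (s o)) (hx : dist o (s o) + dist o x = dist (s o) x)
    (hne : x ≠ o) : dist o (s o) < dist x (s x) := by
  have hox : 0 < dist o x := dist_pos.2 hne.symm
  have hsx : dist (s o) (s x) = dist o x := s.dist_eq _ _
  have hosx := hX.dist_apply_eq_add_of_between hs hx
  have hpos : 0 < dist o (s o) := by linarith [dist_nonneg (x := o) (y := s (s o))]
  have h := hX.dist_eq_add_of_overlap (a := x) (b := o) (c := s o) (d := s x)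
    (by rw [dist_comm x (s o), dist_comm x o]; linarith) (by linarith) hpos
  linarith [dist_comm x o]

lemma eq_of_opposite (hX : FourPointCondition X) {s t : X ≃ᵢ X} {o x : X}
    (hs : dist o (s (s o)) < 2 * dist o (s o)) (ht : dist o (t (t o)) < 2 * dist o (t o))
    (hst : dist o (s o) + dist o (t o) = dist (s o) (t o))
    (hsx : dist x (s x) ≤ dist o (s o)) (htx : dist x (t x) ≤ dist o (t o)) : x = o := by
  by_contra hne
  have h := hX (s o) (t o) o x
  rw [dist_comm (s o) o, dist_comm (t o) o] at h
  have hs_tri := dist_triangle_left (s o) x o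
  have ht_tri := dist_triangle_left (t o) x o
  rcases le_max_iff.1 h with h | h
  · exact htx.not_gt (hX.dist_lt_dist_apply_of_between ht (by linarith) hne)
  · exact hsx.not_gt (hX.dist_lt_dist_apply_of_between hs (by linarith) hne)

lemma dist_mul_apply_of_opposite (hX : FourPointCondition X) {s t : X ≃ᵢ X} {o : X}
    (hs : dist o (s (s o)) < 2 * dist o (s o)) (ht : dist o (t (t o)) < 2 * dist o (t o))
    (hst : dist o (s o) + dist o (t o) = dist (s o) (t o)) :
    dist o ((s * t) o) = dist o (s o) + dist o (t o) ∧ LiesOnAxis (s * t) o := by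
  have hs_pos : 0 < dist o (s o) := by linarith [dist_nonneg (x := o) (y := s (s o))]
  have ht_pos : 0 < dist o (t o) := by linarith [dist_nonneg (x := o) (y := t (t o))]
  have hst_o : dist o (s (t o)) = dist o (s o) + dist o (t o) :=
    hX.dist_apply_eq_add_of_between hs hst
  have hts_o : dist o (t (s o)) = dist o (t o) + dist o (s o) :=
    hX.dist_apply_eq_add_of_between ht (by rw [add_comm, hst, dist_comm])
  have hsts : dist o (s (t (s o))) = dist o (s o) + dist o (t o) + dist o (s o) := by
    have := hX.dist_eq_add_of_overlap (a := o) (b := s o) (c := s (t o)) (d := s (t (s o)))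
    simp only [IsometryEquiv.dist_eq] at this
    exact this hst_o hts_o ht_pos
  have hstst : dist o (s (t (s (t o)))) = 2 * (dist o (s o) + dist o (t o)) := by
    have := hX.dist_eq_add_of_overlap (a := o) (b := s (t o)) (c := s (t (s o)))
      (d := s (t (s (t o))))
    simp only [IsometryEquiv.dist_eq] at this
    linarith [this (by linarith) hst_o hs_pos]
  refine ⟨hst_o, ?_, ?_⟩ <;> simp only [IsometryEquiv.mul_apply] <;> linarith

lemma dist_apply_lt_of_dist_le (hX : FourPointCondition X) {t : X ≃ᵢ X} {o x z : X}
    (hz : dist o z = dist o (t o)) (hx : dist o x + dist x z = dist o z)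
    (hx_pos : 0 < dist o x) (hx_lt : dist o x < dist o (t o))
    (hzt : 2 * dist o x ≤ 2 * dist o (t o) - dist z (t o))
    (htt : 2 * dist o x ≤ 2 * dist o (t o) - dist o (t (t o))) :
    dist x (t x) < dist o (t o) := by
  have hto : dist (t o) (t (t o)) = dist o (t o) := t.dist_eq _ _
  have htx : dist (t x) (t o) = dist o x := by rw [t.dist_eq, dist_comm]
  have htxtt : dist (t x) (t (t o)) = dist x (t o) := t.dist_eq _ _
  have hxo := dist_comm x o
  have hx_to : dist x (t o) ≤ dist o (t o) - dist o x := by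
    have h := hX x (t o) o z
    rw [dist_comm (t o) o, dist_comm (t o) z] at h
    rcases le_max_iff.1 h with h | h <;> linarith
  have ho_tx : dist o (t x) ≤ dist o (t o) - dist o x := by
    rcases le_max_iff.1 (hX o (t x) (t o) (t (t o))) with h | h <;> linarith
  have h := hX x (t x) o (t o)
  rw [dist_comm (t x) o] at h
  rcases le_max_iff.1 h with h | h <;> linarith

lemma eventually_dist_apply_lt (hX : FourPointCondition X) {t : X ≃ᵢ X} {o z : X}
    (hz_pos : 0 < dist o z) (hto : dist o (t o) ≤ dist o z)
    (ht : dist o (t o) = dist o z →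
      dist z (t o) < 2 * dist o z ∧ dist o (t (t o)) < 2 * dist o z) :
    ∀ᶠ δ in nhdsWithin (0 : ℝ) (Set.Ioi 0), ∀ x, dist o x = δ →
      dist o x + dist x z = dist o z → dist x (t x) < dist o z := by
  rcases hto.eq_or_lt with heq | hlt
  · obtain ⟨hzt, htt⟩ := ht heq
    filter_upwards [Ioo_mem_nhdsGT hz_pos, Ioo_mem_nhdsGT (half_pos (sub_pos.2 hzt)),
      Ioo_mem_nhdsGT (half_pos (sub_pos.2 htt))] with δ hδz hδzt hδtt x hx hxz
    subst hx
    rw [← heq]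
    exact hX.dist_apply_lt_of_dist_le heq.symm hxz hδz.1 (by linarith [hδz.2])
      (by linarith [hδzt.2]) (by linarith [hδtt.2])
  · filter_upwards [Ioo_mem_nhdsGT (half_pos (sub_pos.2 hlt))] with δ hδ x hx _
    have htri := dist_triangle4 x o (t o) (t x)
    rw [t.dist_eq, dist_comm x o, hx] at htri
    linarith [hδ.2]

lemma exists_opposite (hX : FourPointCondition X) (hG : GeodesicMetricSpace X)
    {S : Finset (X ≃ᵢ X)} {L : ℝ} (hL : 0 < L) {o : X} (ho : ∀ s ∈ S, dist o (s o) ≤ L)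
    (hmin : ∀ x, ∃ s ∈ S, L ≤ dist x (s x))
    (hoff : ∀ s ∈ S, dist o (s o) = L → dist o (s (s o)) < 2 * L) :
    ∃ s ∈ S, ∃ t ∈ S, dist o (s o) = L ∧ dist o (t o) = L ∧
      dist o (s o) + dist o (t o) = dist (s o) (t o) := by
  by_contra! hcon
  obtain ⟨s, hs, hLs⟩ := hmin o
  obtain rfl : dist o (s o) = L := le_antisymm (ho s hs) hLs
  have hnear : ∀ᶠ δ in nhdsWithin (0 : ℝ) (Set.Ioi 0), ∀ t ∈ S, ∀ x, dist o x = δ →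
      dist o x + dist x (s o) = dist o (s o) → dist x (t x) < dist o (s o) := by
    rw [Filter.eventually_all_finset]
    refine fun t ht => hX.eventually_dist_apply_lt hL (ho t ht) fun hto => ⟨?_, hoff t ht hto⟩
    have htri := dist_triangle_left (s o) (t o) o
    linarith [htri.lt_of_ne (hcon s hs t ht rfl hto).symm]
  obtain ⟨δ, hδ, hδs⟩ := (hnear.and (Ioo_mem_nhdsGT hL)).exists
  obtain ⟨x, hox, hxs⟩ := hG.exists_dist_eq o (s o) (Set.Ioo_subset_Icc_self hδs)
  obtain ⟨t, ht, hLt⟩ := hmin x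
  exact hLt.not_gt (hδ t ht x hox (by linarith))

end FourPointCondition

section Displacement

variable {S : Finset (X ≃ᵢ X)}

lemma dist_le_idispAt {s : X ≃ᵢ X} (hs : s ∈ S) (x : X) : dist x (s x) ≤ idispAt S x :=
  le_csSup (S.finite_toSet.image _).bddAbove ⟨s, hs, rfl⟩

lemma exists_dist_eq_idispAt (hS : S.Nonempty) (x : X) : ∃ s ∈ S, dist x (s x) = idispAt S x :=
  Set.Nonempty.csSup_mem (Set.Nonempty.image _ hS) (S.finite_toSet.image _)

lemma idispSpace_le_idispAt (x : X) : idispSpace S ≤ idispAt S x := by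
  refine csInf_le ⟨0, ?_⟩ ⟨x, rfl⟩
  rintro _ ⟨y, rfl⟩
  exact Real.sSup_nonneg (by rintro _ ⟨s, -, rfl⟩; exact dist_nonneg)

lemma exists_idispSpace_le_dist (hS : S.Nonempty) (x : X) :
    ∃ s ∈ S, idispSpace S ≤ dist x (s x) := by
  obtain ⟨s, hs, hsx⟩ := exists_dist_eq_idispAt hS x
  exact ⟨s, hs, hsx ▸ idispSpace_le_idispAt x⟩

lemma nonempty_of_idispSpace_pos (hpos : 0 < idispSpace S) : Nonempty X := by
  by_contra hempty
  rw [not_nonempty_iff] at hempty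
  rw [idispSpace, Set.range_eq_empty, Real.sInf_empty] at hpos
  exact lt_irrefl _ hpos

namespace FourPointCondition

lemma exists_loxodromic (hX : FourPointCondition X) (hG : GeodesicMetricSpace X)
    (hS : S.Nonempty) (hpos : 0 < idispSpace S) :
    ∃ b : X ≃ᵢ X, (b ∈ S ∨ ∃ s ∈ S, ∃ t ∈ S, b = s * t) ∧ Loxodromic b := by
  by_contra! hcon
  have := nonempty_of_idispSpace_pos hpos
  obtain ⟨p, hp⟩ := hX.exists_common_fixed_point hG hS (fun s hs => hcon s (Or.inl hs))
    fun s hs t ht => hcon (s * t) (Or.inr ⟨s, hs, t, ht, rfl⟩)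
  obtain ⟨s, hs, hsp⟩ := exists_idispSpace_le_dist hS p
  rw [hp s hs, dist_self] at hsp
  exact hpos.not_ge hsp

lemma exists_liesOnAxis_of_minimizer (hX : FourPointCondition X) (hG : GeodesicMetricSpace X)
    (hS : S.Nonempty) (hpos : 0 < idispSpace S) {o : X} (ho : idispAt S o = idispSpace S) :
    ∃ b : X ≃ᵢ X, (b ∈ S ∨ ∃ s ∈ S, ∃ t ∈ S, b = s * t) ∧
      ∀ x, idispAt S x = idispSpace S → idispSpace S ≤ dist x (b x) ∧ LiesOnAxis b x := by
  have hle {x : X} (hx : idispAt S x = idispSpace S) {s : X ≃ᵢ X} (hs : s ∈ S) :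
      dist x (s x) ≤ idispSpace S := hx ▸ dist_le_idispAt hs x
  by_cases hall : ∃ s ∈ S, ∀ x, idispSpace S ≤ dist x (s x)
  · obtain ⟨s, hs, hmin⟩ := hall
    refine ⟨s, Or.inl hs, fun x hx => ⟨hmin x, ?_⟩⟩
    exact hX.liesOnAxis_of_forall_dist_le hG (hpos.trans_le (hmin x))
      fun y => (hle hx hs).trans (hmin y)
  · push Not at hall
    have hoff : ∀ s ∈ S, dist o (s o) = idispSpace S →
        dist o (s (s o)) < 2 * idispSpace S := by
      intro s hs hso
      have htri := dist_triangle o (s o) (s (s o))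
      rw [s.dist_eq, ← two_mul, hso] at htri
      refine htri.lt_of_ne fun haligned => ?_
      have haxis : LiesOnAxis s o := ⟨hso ▸ hpos, hso ▸ haligned⟩
      obtain ⟨x, hx⟩ := hall s hs
      exact (hso ▸ haxis.dist_apply_le hX x).not_gt hx
    obtain ⟨s, hs, t, ht, hso, hto, hst⟩ :=
      hX.exists_opposite hG hpos (fun s hs => hle ho hs) (exists_idispSpace_le_dist hS) hoff
    have hs_off : dist o (s (s o)) < 2 * dist o (s o) := hso ▸ hoff s hs hso
    have ht_off : dist o (t (t o)) < 2 * dist o (t o) := hto ▸ hoff t ht hto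
    refine ⟨s * t, Or.inr ⟨s, hs, t, ht, rfl⟩, fun x hx => ?_⟩
    obtain rfl : x = o := hX.eq_of_opposite hs_off ht_off hst
      ((hle hx hs).trans hso.ge) ((hle hx ht).trans hto.ge)
    obtain ⟨hdist, haxis⟩ := hX.dist_mul_apply_of_opposite hs_off ht_off hst
    exact ⟨by linarith, haxis⟩

end FourPointCondition

end Displacement

end FourPoint

theorem statement7_general {X : Type*} [MetricSpace X] (hG : GeodesicMetricSpace X)
    (hD : DeltaHyperbolic X 0) {S : Finset (X ≃ᵢ X)} (hS : S.Nonempty)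
    (hpos : 0 < idispSpace S) :
    ∃ b : X ≃ᵢ X, (b ∈ S ∨ ∃ s ∈ S, ∃ t ∈ S, b = s * t) ∧ Loxodromic b ∧
      ∀ o : X, idispAt S o = idispSpace S →
        idispSpace S ≤ dist o (b o) ∧
        ∀ γ : ℝ → X, IsGeodesicSeg γ o (b o) → Isometry (axisPath b o γ) := by
  have hX := hD.fourPointCondition hG
  by_cases hattained : ∃ o, idispAt S o = idispSpace S
  · obtain ⟨o, ho⟩ := hattained
    obtain ⟨b, hb, haxis⟩ := hX.exists_liesOnAxis_of_minimizer hG hS hpos ho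
    have hlox : Loxodromic b :=
      hX.loxodromic_of_dist_lt (haxis o ho).2.dist_lt_dist_apply_apply
    exact ⟨b, hb, hlox, fun x hx =>
      ⟨(haxis x hx).1, fun γ hγ => (haxis x hx).2.isometry_axisPath hX hγ⟩⟩
  · obtain ⟨b, hb, hlox⟩ := hX.exists_loxodromic hG hS hpos
    exact ⟨b, hb, hlox, fun o ho => absurd ⟨o, ho⟩ hattained⟩

/-- Let `X` be a simplicial tree (formalized metrically: a `0`-hyperbolic
geodesic metric space, the combinatorial-metric realization of a simplicial tree) and let
`S` be a finite nonempty set of automorphisms (isometries) of `X` with `λ(S, X) > 0`,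
i.e. without global fixed point. Then `S^{≤2} = S ∪ S·S` contains a loxodromic element `b`
such that, for a universal constant `c₀ > 0`, for every `o ∈ X` with `λ(S,o) = λ(S,X)`
one has `d(o, b·o) ≥ λ(S,X) − 10` and the bi-infinite concatenation
`α = ⋃_{n∈ℤ} bⁿ[o, b·o]` of translates of the geodesic `[o, b·o]` is a
`c₀`-quasi-geodesic (a quasi-axis for `b`). -/
theorem statement7 :
    ∃ c₀ : ℝ, 0 < c₀ ∧
      ∀ (X : Type*) [MetricSpace X], GeodesicMetricSpace X → DeltaHyperbolic X 0 →
        ∀ S : Finset (X ≃ᵢ X), S.Nonempty → 0 < idispSpace S →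
          ∃ b : X ≃ᵢ X, (b ∈ S ∨ ∃ s ∈ S, ∃ t ∈ S, b = s * t) ∧ Loxodromic b ∧
            ∀ o : X, idispAt S o = idispSpace S →
              idispSpace S - 10 ≤ dist o (b o) ∧
              ∃ γ : ℝ → X, IsGeodesicSeg γ o (b o) ∧
                IsQuasiGeodesicParam c₀ (axisPath b o γ) := by
  refine ⟨1, one_pos, fun X _ hG hD S hS hpos => ?_⟩
  obtain ⟨b, hb, hlox, hmin⟩ := statement7_general hG hD hS hpos
  refine ⟨b, hb, hlox, fun o ho => ⟨by linarith [(hmin o ho).1], ?_⟩⟩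
  obtain ⟨γ, hγ⟩ := hG o (b o)
  exact ⟨γ, hγ, isQuasiGeodesicParam_of_isometry ((hmin o ho).2 γ hγ) le_rfl⟩
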